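/- The spectrum of U(s,r,s) as a bounded operator on bv_p (1 < p < ∞) equals [r − 2s, r + 2s] = {r + 2s·cos θ : θ ∈ [0, 2π]}, and coincides entirely with the continuous spectrum (the point and residual spectra being empty). -/

import Mathlib

open scoped ENNReal

/-- The backward difference (Δ x)_k = x_k − x_{k−1}, with x_{-1} = 0. -/
noncomputable def dL (x : ℕ → ℂ) : ℕ → ℂ :=
  fun k => x k - (if k = 0 then 0 else x (k - 1))

/-- The submodule of sequences x with Δx ∈ ℓ_p, i.e. bv_p. -/
noncomputable def bvSubmodule (p : ℝ≥0∞) : Submodule ℂ (ℕ → ℂ) where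
  carrier := {x | Memℓp (dL x) p}
  add_mem' := by
    intro a b ha hb
    have h : dL (a + b) = dL a + dL b := by
      funext k; simp only [dL, Pi.add_apply, Pi.smul_apply, smul_eq_mul]; split_ifs <;> ring
    simpa [Set.mem_setOf_eq, h] using ha.add hb
  zero_mem' := by
    have h : dL 0 = 0 := by funext k; simp [dL]
    simpa [Set.mem_setOf_eq, h] using zero_memℓp
  smul_mem' := by
    intro c a ha
    have h : dL (c • a) = c • dL a := by
      funext k; simp only [dL, Pi.add_apply, Pi.smul_apply, smul_eq_mul]; split_ifs <;> ring
    simpa [Set.mem_setOf_eq, h] using ha.const_smul c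

/-- The space bv_p as a type. -/
noncomputable def BV (p : ℝ≥0∞) := ↥(bvSubmodule p)

noncomputable instance (p : ℝ≥0∞) : AddCommGroup (BV p) :=
  inferInstanceAs (AddCommGroup ↥(bvSubmodule p))
noncomputable instance (p : ℝ≥0∞) : Module ℂ (BV p) :=
  inferInstanceAs (Module ℂ ↥(bvSubmodule p))

/-- The difference map bv_p → ℓ_p as a linear map. -/
noncomputable def dLhat (p : ℝ≥0∞) : BV p →ₗ[ℂ] lp (fun _ : ℕ => ℂ) p where
  toFun x := ⟨dL x.1, x.2⟩
  map_add' a b := by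
    ext k
    show dL (a.1 + b.1) k = dL a.1 k + dL b.1 k
    simp only [dL, Pi.add_apply]
    split_ifs <;> ring
  map_smul' c a := by
    ext k
    show dL (c • a.1) k = c * dL a.1 k
    simp only [dL, Pi.smul_apply, smul_eq_mul]
    split_ifs <;> ring

theorem dLhat_injective (p : ℝ≥0∞) : Function.Injective (dLhat p) := by
  intro x y h
  have hd : dL x.1 = dL y.1 := congrArg Subtype.val h
  have : ∀ n, x.1 n = y.1 n := by
    intro n
    induction n with
    | zero =>
        have := congrFun hd 0
        simpa [dL] using this
    | succ n ih =>
        have := congrFun hd (n + 1)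
        simp [dL] at this
        linear_combination this + ih
  exact Subtype.ext (funext this)

/-- bv_p with the norm ‖x‖ = ‖Δx‖_{ℓ_p}, induced along the difference map. -/
noncomputable instance (p : ℝ≥0∞) [Fact (1 ≤ p)] : NormedAddCommGroup (BV p) :=
  NormedAddCommGroup.induced (BV p) (lp (fun _ : ℕ => ℂ) p) (dLhat p) (dLhat_injective p)

noncomputable instance (p : ℝ≥0∞) [Fact (1 ≤ p)] : NormedSpace ℂ (BV p) :=
  NormedSpace.induced ℂ (BV p) (lp (fun _ : ℕ => ℂ) p) (dLhat p)

open Real Set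

/-- The tridiagonal operator U(s,r,s) acting on sequences, with x_{-1} = 0. -/
noncomputable def Ufun (s r : ℂ) (x : ℕ → ℂ) : ℕ → ℂ :=
  fun k => (if k = 0 then 0 else s * x (k - 1)) + r * x k + s * x (k + 1)

/-- The sequence space `ℓ_p` over `ℕ` with complex values. -/
noncomputable abbrev EllP (p : ℝ≥0∞) := lp (fun _ : ℕ => ℂ) p

section Shifts

variable {p : ℝ≥0∞} [Fact (1 ≤ p)]

theorem toReal_pos_of_one_le (hp : p ≠ ∞) : 0 < p.toReal :=
  ENNReal.toReal_pos (zero_lt_one.trans_le Fact.out).ne' hp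

theorem summable_succ_rpow (hp : p ≠ ∞) (f : EllP p) :
    Summable fun k => ‖f (k + 1)‖ ^ p.toReal :=
  (summable_nat_add_iff 1).2 ((lp.memℓp f).summable (toReal_pos_of_one_le hp))

theorem norm_rpow_eq_zero_add (hp : p ≠ ∞) (f : EllP p) :
    ‖f‖ ^ p.toReal = ‖f 0‖ ^ p.toReal + ∑' k, ‖f (k + 1)‖ ^ p.toReal := by
  rw [lp.norm_rpow_eq_tsum (toReal_pos_of_one_le hp),
    ((lp.memℓp f).summable (toReal_pos_of_one_le hp)).tsum_eq_zero_add]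

/-- The right shift `(f₀, f₁, …) ↦ (0, f₀, f₁, …)` on `ℓ_p`. -/
noncomputable def rightShift (hp : p ≠ ∞) : EllP p →L[ℂ] EllP p :=
  LinearMap.mkContinuous
    { toFun := fun f => ⟨fun k => Nat.casesOn k 0 f, by
        refine memℓp_gen ((summable_nat_add_iff 1).1 ?_)
        exact (lp.memℓp f).summable (toReal_pos_of_one_le hp)⟩
      map_add' := fun f g => by
        ext k
        cases k
        · exact (add_zero (0 : ℂ)).symm
        · rfl
      map_smul' := fun c f => by
        ext k
        cases k
        · exact (smul_zero c).symm
        · rfl }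
    1 (fun f => by
      have hp₀ := toReal_pos_of_one_le hp
      rw [one_mul, ← Real.rpow_le_rpow_iff (norm_nonneg _) (norm_nonneg _) hp₀,
        norm_rpow_eq_zero_add hp, lp.norm_rpow_eq_tsum hp₀ f]
      simp [Real.zero_rpow hp₀.ne'])

/-- The left shift `(f₀, f₁, …) ↦ (f₁, f₂, …)` on `ℓ_p`. -/
noncomputable def leftShift (hp : p ≠ ∞) : EllP p →L[ℂ] EllP p :=
  LinearMap.mkContinuous
    { toFun := fun f => ⟨fun k => f (k + 1), memℓp_gen (summable_succ_rpow hp f)⟩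
      map_add' := fun _ _ => rfl
      map_smul' := fun _ _ => rfl }
    1 (fun f => by
      have hp₀ := toReal_pos_of_one_le hp
      rw [one_mul, ← Real.rpow_le_rpow_iff (norm_nonneg _) (norm_nonneg _) hp₀,
        norm_rpow_eq_zero_add hp f, lp.norm_rpow_eq_tsum hp₀]
      exact le_add_of_nonneg_left (by positivity))

theorem rightShift_apply_zero (hp : p ≠ ∞) (f : EllP p) : rightShift hp f 0 = 0 := rfl

theorem rightShift_apply_succ (hp : p ≠ ∞) (f : EllP p) (k : ℕ) :
    rightShift hp f (k + 1) = f k := rfl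

theorem norm_rightShift_le (hp : p ≠ ∞) : ‖rightShift (p := p) hp‖ ≤ 1 :=
  LinearMap.mkContinuous_norm_le _ zero_le_one _

theorem norm_leftShift_le (hp : p ≠ ∞) : ‖leftShift (p := p) hp‖ ≤ 1 :=
  LinearMap.mkContinuous_norm_le _ zero_le_one _

theorem leftShift_mul_rightShift (hp : p ≠ ∞) :
    leftShift (p := p) hp * rightShift hp = 1 := rfl

theorem rightShift_single (hp : p ≠ ∞) (k : ℕ) (a : ℂ) :
    rightShift hp (lp.single p k a) = lp.single p (k + 1) a := by
  ext j
  cases j with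
  | zero => simp [rightShift_apply_zero]
  | succ j => simp [rightShift_apply_succ, Pi.single_apply]

theorem leftShift_single_succ (hp : p ≠ ∞) (k : ℕ) (a : ℂ) :
    leftShift hp (lp.single p (k + 1) a) = lp.single p k a := by
  rw [← rightShift_single hp]
  rfl

/-- The discrete half-line Neumann operator
`(f₀, f₁, …) ↦ (f₀ + f₁, f₀ + f₂, f₁ + f₃, …)` on `ℓ_p`. -/
noncomputable def neumann (hp : p ≠ ∞) : EllP p →L[ℂ] EllP p :=
  rightShift hp + leftShift hp + (1 - rightShift hp * leftShift hp)

theorem neumann_apply_zero (hp : p ≠ ∞) (f : EllP p) : neumann hp f 0 = f 0 + f 1 := by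
  change 0 + f 1 + (f 0 - 0) = _
  ring

theorem neumann_apply_succ (hp : p ≠ ∞) (f : EllP p) (k : ℕ) :
    neumann hp f (k + 1) = f k + f (k + 2) := by
  change f k + f (k + 2) + (f (k + 1) - f (k + 1)) = _
  ring

theorem neumann_single_succ (hp : p ≠ ∞) (k : ℕ) (a : ℂ) :
    neumann hp (lp.single p (k + 1) a) = lp.single p k a + lp.single p (k + 2) a := by
  simpa [neumann, leftShift_single_succ, rightShift_single] using add_comm _ _

end Shifts

/-- Factorization of a Neumann-type perturbation of `S + L` when `L` is a left inverse of `S`. -/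
theorem shift_factorization {A : Type*} [Ring A] [Algebra ℂ A] {S L : A} (h : L * S = 1)
    {z : ℂ} (hz : z ≠ 0) :
    S + L + (1 - S * L) - (z + z⁻¹) • (1 : A) =
      (-z⁻¹) • ((1 - z • L) * (1 - z • (1 - S * L)) * (1 - z • S)) := by
  have h₁ : L * (S * L) = L := by rw [← mul_assoc, h, one_mul]
  have h₂ : S * L * S = S := by rw [mul_assoc, h, mul_one]
  have h₃ : (1 - z • L) * (1 - z • (1 - S * L)) * (1 - z • S) =
      (1 + z ^ 2) • (1 : A) - z • (S + L + (1 - S * L)) := by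
    have h₄ : (1 - z • (1 - S * L)) * (1 - z • S) = 1 - z • S - z • (1 - S * L) := by
      simp only [mul_sub, sub_mul, mul_one, one_mul, smul_mul_assoc, mul_smul_comm, h₂]
      module
    rw [mul_assoc, h₄]
    simp only [mul_sub, sub_mul, mul_one, one_mul, smul_mul_assoc, mul_smul_comm, h, h₁]
    module
  rw [h₃, smul_sub, smul_smul, smul_smul]
  have h₅ : -z⁻¹ * z = -1 := by field_simp
  have h₆ : -z⁻¹ * (1 + z ^ 2) = -(z + z⁻¹) := by field_simp; ring
  rw [h₅, h₆]
  module

theorem isUnit_one_sub_smul_of_isIdempotentElem {A : Type*} [Ring A] [Algebra ℂ A] {P : A}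
    (hP : IsIdempotentElem P) {z : ℂ} (hz : z ≠ 1) : IsUnit (1 - z • P) := by
  have hz' : 1 - z ≠ 0 := sub_ne_zero.2 hz.symm
  have hc : z / (1 - z) - z - z * (z / (1 - z)) = 0 := by field_simp; ring
  have key : (z / (1 - z)) • P - z • P - (z * (z / (1 - z))) • P = 0 := by
    rw [← sub_smul, ← sub_smul, hc, zero_smul]
  refine ⟨⟨1 - z • P, 1 + (z / (1 - z)) • P, ?_, ?_⟩, rfl⟩
  · simp only [sub_mul, mul_add, mul_one, one_mul, smul_mul_smul_comm, hP.eq]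
    rw [← sub_eq_zero, ← key]
    abel
  · simp only [add_mul, mul_sub, mul_one, one_mul, smul_mul_smul_comm, hP.eq]
    rw [← sub_eq_zero, ← key, mul_comm z]
    abel

theorem exists_add_inv_eq {μ : ℂ} (hμ : ∀ θ ∈ Icc (0 : ℝ) (2 * π), μ ≠ 2 * Real.cos θ) :
    ∃ z : ℂ, z ≠ 0 ∧ ‖z‖ < 1 ∧ z + z⁻¹ = μ := by
  obtain ⟨w, hw⟩ := IsAlgClosed.exists_pow_nat_eq (μ ^ 2 - 4) (n := 2) two_pos
  have hprod : (μ + w) / 2 * ((μ - w) / 2) = 1 := by linear_combination (-1 / 4) * hw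
  generalize hz : (μ + w) / 2 = z at hprod
  have hz₀ : z ≠ 0 := left_ne_zero_of_mul_eq_one hprod
  have hinv : z⁻¹ = (μ - w) / 2 := inv_eq_of_mul_eq_one_right hprod
  have hsum : z + z⁻¹ = μ := by rw [hinv, ← hz]; ring
  rcases lt_trichotomy ‖z‖ 1 with h | h | h
  · exact ⟨z, hz₀, h, hsum⟩
  · have hre : |z.re| ≤ 1 := h ▸ Complex.abs_re_le_norm z
    refine absurd ?_ (hμ (Real.arccos z.re)
      ⟨Real.arccos_nonneg _, (Real.arccos_le_pi _).trans (by linarith [Real.pi_pos])⟩)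
    rw [Real.cos_arccos (abs_le.1 hre).1 (abs_le.1 hre).2, ← hsum, Complex.inv_eq_conj h,
      Complex.add_conj]
    push_cast
    ring
  · exact ⟨z⁻¹, inv_ne_zero hz₀, by rw [norm_inv]; exact inv_lt_one_of_one_lt₀ h,
      by rw [inv_inv, add_comm, hsum]⟩

/-- Solutions on the unit circle of the free recurrence do not decay. -/
theorem eq_zero_of_recurrence_of_tendsto {y : ℕ → ℂ} {z : ℂ} (hz : ‖z‖ = 1)
    (hrec : ∀ k, y (k + 2) = (z + z⁻¹) * y (k + 1) - y k)
    (hlim : Filter.Tendsto y Filter.atTop (nhds 0)) : y = 0 := by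
  have hz₀ : z ≠ 0 := norm_ne_zero_iff.1 (by rw [hz]; exact one_ne_zero)
  have decay : ∀ (w : ℕ → ℂ) (a : ℂ), ‖a‖ = 1 → (∀ k, w (k + 1) = a * w k) →
      Filter.Tendsto w Filter.atTop (nhds 0) → ∀ k, w k = 0 := by
    intro w a ha hw hw₀
    have hconst : ∀ k, ‖w k‖ = ‖w 0‖ := by
      intro k
      induction k with
      | zero => rfl
      | succ k ih => rw [hw, norm_mul, ha, one_mul, ih]
    have h₀ : ‖w 0‖ = 0 := by
      have := hw₀.norm
      simp only [hconst, norm_zero] at this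
      exact tendsto_nhds_unique tendsto_const_nhds this
    exact fun k => norm_eq_zero.1 ((hconst k).trans h₀)
  have hw : ∀ k, y (k + 1) - z * y k = 0 := by
    refine decay (fun k => y (k + 1) - z * y k) z⁻¹ (by rw [norm_inv, hz, inv_one]) ?_ ?_
    · intro k
      simp only [hrec]
      field_simp
      ring
    · simpa using (hlim.comp (Filter.tendsto_add_atTop_nat 1)).sub (hlim.const_mul z)
  exact funext (decay y z hz (fun k => sub_eq_zero.1 (hw k)) hlim)

section Spectrum

variable {p : ℝ≥0∞} [Fact (1 ≤ p)]

theorem isUnit_neumann_sub (hp : p ≠ ∞) {μ : ℂ}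
    (hμ : ∀ θ ∈ Icc (0 : ℝ) (2 * π), μ ≠ 2 * Real.cos θ) :
    IsUnit (neumann (p := p) hp - μ • 1) := by
  obtain ⟨z, hz₀, hz₁, rfl⟩ := exists_add_inv_eq hμ
  have hLS := leftShift_mul_rightShift (p := p) hp
  have hsmul : ∀ A : EllP p →L[ℂ] EllP p, ‖A‖ ≤ 1 → ‖z • A‖ < 1 := fun A hA =>
    (norm_smul_le z A).trans_lt ((mul_le_of_le_one_right (norm_nonneg z) hA).trans_lt hz₁)
  have hidem : IsIdempotentElem (1 - rightShift (p := p) hp * leftShift hp) := by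
    refine IsIdempotentElem.one_sub ?_
    rw [IsIdempotentElem, mul_assoc, ← mul_assoc (leftShift hp), hLS, one_mul]
  rw [neumann, shift_factorization hLS hz₀]
  refine IsUnit.smul (Units.mk0 (-z⁻¹) (neg_ne_zero.2 (inv_ne_zero hz₀))) ?_
  refine ((isUnit_one_sub_of_norm_lt_one (hsmul _ (norm_leftShift_le hp))).mul
    (isUnit_one_sub_smul_of_isIdempotentElem hidem ?_)).mul
    (isUnit_one_sub_of_norm_lt_one (hsmul _ (norm_rightShift_le hp)))
  rintro rfl
  simp at hz₁

theorem tendsto_coeFn_atTop_zero (hp : p ≠ ∞) (f : EllP p) :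
    Filter.Tendsto (fun k => f k) Filter.atTop (nhds 0) := by
  have hp₀ := toReal_pos_of_one_le hp
  have h := ((lp.memℓp f).summable hp₀).tendsto_atTop_zero.rpow_const
    (p := p.toReal⁻¹) (Or.inr (inv_nonneg.2 hp₀.le))
  simp only [Real.rpow_rpow_inv (norm_nonneg _) hp₀.ne',
    Real.zero_rpow (inv_ne_zero hp₀.ne')] at h
  exact tendsto_zero_iff_norm_tendsto_zero.2 h

/-- The standard unit vectors of `ℓ_p`, `1 < p < ∞`, converge weakly to zero. -/
theorem tendsto_dual_single_zero (hp : 1 < p) (hp' : p ≠ ∞) (φ : EllP p →L[ℂ] ℂ) :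
    Filter.Tendsto (fun k => φ (lp.single p k 1)) Filter.atTop (nhds 0) := by
  have hp₀ := toReal_pos_of_one_le hp'
  have hp₁ : 1 < p.toReal := by
    rw [← ENNReal.toReal_one]
    exact (ENNReal.toReal_lt_toReal ENNReal.one_ne_top hp').2 hp
  rw [← Nat.cofinite_eq_atTop, Metric.tendsto_nhds]
  intro ε hε
  rw [Filter.eventually_cofinite]
  by_contra hinf
  have bound : ∀ n : ℕ, (n : ℝ) * ε ≤ ‖φ‖ * (n : ℝ) ^ p.toReal⁻¹ := by
    intro n
    obtain ⟨s, hs, rfl⟩ := Set.Infinite.exists_subset_card_eq hinf n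
    set c : ℕ → ℂ := fun k => φ (lp.single p k 1) with hc
    have hcε : ∀ k ∈ s, ε ≤ ‖c k‖ := fun k hk => by
      simpa [hc] using hs hk
    set u : ℕ → ℂ := fun k => (starRingEnd ℂ) (c k) / ‖c k‖ with hu
    have hnorm : ‖∑ k ∈ s, lp.single p k (u k)‖ = (s.card : ℝ) ^ p.toReal⁻¹ := by
      have h := lp.norm_sum_single (E := fun _ : ℕ => ℂ) hp₀ u s
      have h1 : ∀ k ∈ s, ‖u k‖ ^ p.toReal = 1 := fun k hk => by
        have : ‖c k‖ ≠ 0 := (hε.trans_le (hcε k hk)).ne'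
        simp [hu, this]
      rw [Finset.sum_congr rfl h1, Finset.sum_const, nsmul_eq_mul, mul_one] at h
      rw [← h, Real.rpow_rpow_inv (norm_nonneg _) hp₀.ne']
    have hval : φ (∑ k ∈ s, lp.single p k (u k)) = ((∑ k ∈ s, ‖c k‖ : ℝ) : ℂ) := by
      rw [map_sum, Complex.ofReal_sum]
      refine Finset.sum_congr rfl fun k hk => ?_
      have h0 : (‖c k‖ : ℂ) ≠ 0 :=
        Complex.ofReal_ne_zero.2 (hε.trans_le (hcε k hk)).ne'
      have hsingle : lp.single p k (u k) = u k • lp.single (E := fun _ : ℕ => ℂ) p k 1 := by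
        rw [← lp.single_smul, smul_eq_mul, mul_one]
      rw [hsingle, map_smul, smul_eq_mul, hu]
      change (starRingEnd ℂ) (c k) / ‖c k‖ * c k = _
      rw [div_mul_eq_mul_div, Complex.conj_mul', pow_two, mul_div_assoc, div_self h0, mul_one]
    calc (s.card : ℝ) * ε ≤ ∑ k ∈ s, ‖c k‖ := by
          simpa using Finset.card_nsmul_le_sum s (fun k => ‖c k‖) ε hcε
      _ = ‖φ (∑ k ∈ s, lp.single p k (u k))‖ := by
          rw [hval, Complex.norm_real, Real.norm_of_nonneg (by positivity)]
      _ ≤ ‖φ‖ * (s.card : ℝ) ^ p.toReal⁻¹ := hnorm ▸ φ.le_opNorm _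
  have hlim : Filter.Tendsto (fun n : ℕ => ‖φ‖ * (n : ℝ) ^ (-(1 - p.toReal⁻¹))) Filter.atTop
      (nhds 0) := by
    have h := (tendsto_rpow_neg_atTop (sub_pos.2 (inv_lt_one_of_one_lt₀ hp₁))).comp
      (tendsto_natCast_atTop_atTop (R := ℝ))
    simpa only [mul_zero, Function.comp_def] using h.const_mul ‖φ‖
  refine absurd (ge_of_tendsto hlim (b := ε) ?_) (not_le.2 hε)
  filter_upwards [Filter.eventually_gt_atTop 0] with n hn
  have hn' : (0 : ℝ) < n := Nat.cast_pos.2 hn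
  rw [neg_sub, Real.rpow_sub hn', Real.rpow_one, ← mul_div_assoc, le_div_iff₀ hn', mul_comm]
  exact bound n

theorem exists_norm_eq_one_add_inv (θ : ℝ) :
    ∃ z : ℂ, ‖z‖ = 1 ∧ z + z⁻¹ = 2 * Real.cos θ := by
  refine ⟨Complex.exp (θ * Complex.I), Complex.norm_exp_ofReal_mul_I θ, ?_⟩
  rw [← Complex.exp_neg, Complex.ofReal_cos, Complex.two_cos, neg_mul]

/-- A solution of the eigenvalue equation away from the boundary vanishes. -/
theorem eq_zero_of_neumann_sub_apply_succ (hp : p ≠ ∞) {θ : ℝ} {f : EllP p}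
    (hf : ∀ k, (neumann hp - (2 * Real.cos θ : ℂ) • 1) f (k + 1) = 0) : f = 0 := by
  obtain ⟨z, hz, hsum⟩ := exists_norm_eq_one_add_inv θ
  refine lp.ext (eq_zero_of_recurrence_of_tendsto hz (fun k => ?_)
    (tendsto_coeFn_atTop_zero hp f))
  have h : neumann hp f (k + 1) - (2 * Real.cos θ : ℂ) * f (k + 1) = 0 := hf k
  rw [neumann_apply_succ, ← hsum] at h
  linear_combination h

theorem injective_neumann_sub_cos (hp : p ≠ ∞) (θ : ℝ) :
    Function.Injective ⇑(neumann (p := p) hp - (2 * Real.cos θ : ℂ) • 1) := by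
  refine (injective_iff_map_eq_zero _).2 fun f hf => ?_
  exact eq_zero_of_neumann_sub_apply_succ hp fun k => by rw [hf]; rfl

theorem not_isUnit_neumann_sub_cos (hp : p ≠ ∞) (θ : ℝ) :
    ¬ IsUnit (neumann (p := p) hp - (2 * Real.cos θ : ℂ) • 1) := by
  intro hu
  obtain ⟨f, hf⟩ := (ContinuousLinearMap.isUnit_iff_bijective.1 hu).2 (lp.single p 0 1)
  have hf₀ : f = 0 := eq_zero_of_neumann_sub_apply_succ hp fun k => by
    rw [hf]
    simp
  have h := congrArg (fun g : EllP p => g 0) hf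
  simp [hf₀] at h

theorem injective_neumann_sub (hp : p ≠ ∞) (μ : ℂ) :
    Function.Injective ⇑(neumann (p := p) hp - μ • 1) := by
  by_cases hμ : ∃ θ ∈ Icc (0 : ℝ) (2 * π), μ = 2 * Real.cos θ
  · obtain ⟨θ, -, rfl⟩ := hμ
    exact injective_neumann_sub_cos hp θ
  · push Not at hμ
    exact (ContinuousLinearMap.isUnit_iff_bijective.1 (isUnit_neumann_sub hp hμ)).1

end Spectrum

theorem denseRange_of_forall_dual {𝕜 E F : Type*} [RCLike 𝕜] [NormedAddCommGroup E]
    [NormedSpace 𝕜 E] [NormedAddCommGroup F] [NormedSpace 𝕜 F] (A : E →L[𝕜] F)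
    (h : ∀ φ : F →L[𝕜] 𝕜, φ.comp A = 0 → φ = 0) : DenseRange A := by
  have hclosed : IsClosed (A.range.topologicalClosure : Set F) :=
    Submodule.isClosed_topologicalClosure _
  change Dense (A.range : Set F)
  rw [Submodule.dense_iff_topologicalClosure_eq_top, Submodule.eq_top_iff']
  intro x
  rw [← Submodule.Quotient.mk_eq_zero]
  refine SeparatingDual.eq_zero_of_forall_dual_eq_zero (R := 𝕜) fun g => ?_
  have hg := h (g.comp A.range.topologicalClosure.mkQL) (by
    ext y
    have : A.range.topologicalClosure.mkQL (A y) = 0 :=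
      (Submodule.Quotient.mk_eq_zero _).2 (A.range.le_topologicalClosure ⟨y, rfl⟩)
    simp [this])
  exact DFunLike.congr_fun hg x

theorem denseRange_neumann_sub {p : ℝ≥0∞} [Fact (1 ≤ p)] (hp : 1 < p) (hp' : p ≠ ∞) (μ : ℂ) :
    DenseRange ⇑(neumann (p := p) hp' - μ • 1) := by
  by_cases hμ : ∃ θ ∈ Icc (0 : ℝ) (2 * π), μ = 2 * Real.cos θ
  · obtain ⟨θ, -, rfl⟩ := hμ
    refine denseRange_of_forall_dual _ fun φ hφ => ?_
    obtain ⟨z, hz, hsum⟩ := exists_norm_eq_one_add_inv θ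
    have hzero := eq_zero_of_recurrence_of_tendsto hz (fun k => ?_)
      (tendsto_dual_single_zero hp hp' φ)
    · refine lp.ext_continuousLinearMap hp' fun k => ?_
      ext
      exact congrFun hzero k
    · have h : φ (neumann hp' (lp.single p (k + 1) 1) -
          (2 * Real.cos θ : ℂ) • lp.single p (k + 1) 1) = 0 :=
        DFunLike.congr_fun hφ (lp.single p (k + 1) 1)
      rw [neumann_single_succ, ← hsum, map_sub, map_add, map_smul, smul_eq_mul] at h
      linear_combination h
  · push Not at hμ
    exact (ContinuousLinearMap.isUnit_iff_bijective.1
      (isUnit_neumann_sub hp' hμ)).2.denseRange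

theorem dLhat_surjective (p : ℝ≥0∞) : Function.Surjective (dLhat p) := by
  intro f
  have hd : dL (fun k => ∑ i ∈ Finset.range (k + 1), f i) = f := by
    funext k
    cases k with
    | zero => simp [dL]
    | succ k => simp [dL, Finset.sum_range_succ _ (k + 1)]
  have hmem : Memℓp (dL (fun k => ∑ i ∈ Finset.range (k + 1), f i)) p := by
    rw [hd]
    exact lp.memℓp f
  exact ⟨⟨_, hmem⟩, lp.ext hd⟩

/-- The difference operator as an isometric isomorphism `bv_p ≃ ℓ_p`. -/
noncomputable def bvEquiv (p : ℝ≥0∞) [Fact (1 ≤ p)] : BV p ≃ₗᵢ[ℂ] EllP p :=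
  LinearIsometryEquiv.ofSurjective ⟨dLhat p, fun _ => rfl⟩ (dLhat_surjective p)

theorem bvEquiv_apply {p : ℝ≥0∞} [Fact (1 ≤ p)] (x : BV p) (k : ℕ) :
    bvEquiv p x k = dL x.1 k := rfl

theorem bvEquiv_apply_of_eq_Ufun {p : ℝ≥0∞} [Fact (1 ≤ p)] (hp : p ≠ ∞) {r s : ℂ}
    {T : BV p →L[ℂ] BV p} (hT : ∀ (x : BV p) (k : ℕ), (T x).1 k = Ufun s r x.1 k) (x : BV p) :
    bvEquiv p (T x) = r • bvEquiv p x + s • neumann hp (bvEquiv p x) := by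
  ext k
  change bvEquiv p (T x) k = r * bvEquiv p x k + s * neumann hp (bvEquiv p x) k
  rcases k with _ | k
  · simp [neumann_apply_zero, bvEquiv_apply, dL, hT, Ufun]
  · rw [neumann_apply_succ]
    rcases k with _ | k
    · simp [bvEquiv_apply, dL, hT, Ufun]
      ring
    · simp [bvEquiv_apply, dL, hT, Ufun]
      ring

theorem sub_smul_one_eq_conj_neumann {p : ℝ≥0∞} [Fact (1 ≤ p)] (hp : p ≠ ∞) {r s : ℂ}
    (hs : s ≠ 0) {T : BV p →L[ℂ] BV p}
    (hT : ∀ (x : BV p) (k : ℕ), (T x).1 k = Ufun s r x.1 k) (lam : ℂ) :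
    T - lam • 1 = s • (bvEquiv p).symm.toContinuousLinearEquiv.conjContinuousAlgEquiv
      (neumann hp - ((lam - r) / s) • 1) := by
  ext1 x
  apply (bvEquiv p).injective
  have hlam : s * ((lam - r) / s) = lam - r := mul_div_cancel₀ _ hs
  change bvEquiv p (T x - lam • x) = bvEquiv p (s • (bvEquiv p).symm
    (neumann hp (bvEquiv p x) - ((lam - r) / s) • bvEquiv p x))
  rw [map_sub, map_smul, map_smul, LinearIsometryEquiv.apply_symm_apply,
    bvEquiv_apply_of_eq_Ufun hp hT, smul_sub, smul_smul, hlam]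
  module

/-- The spectrum of U(s,r,s) on bv_p is the segment
[r − 2s, r + 2s] = {r + 2s cos θ : θ ∈ [0, 2π]}, and it coincides with the
continuous spectrum: U − λI is always injective (empty point spectrum) and has
dense range for every λ in the spectrum (empty residual spectrum). -/
theorem stmt18 (r s : ℝ) (hs : s ≠ 0) (p : ℝ≥0∞) (hp : 1 < p) (hp' : p ≠ ∞)
    [Fact (1 ≤ p)] (T : BV p →L[ℂ] BV p)
    (hT : ∀ (x : BV p) (k : ℕ), (T x).1 k = Ufun (s : ℂ) (r : ℂ) x.1 k) :
    spectrum ℂ T = {lam : ℂ | ∃ t ∈ Icc (-2 : ℝ) 2, lam = r + t * s} ∧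
    spectrum ℂ T =
      {lam : ℂ | ∃ θ ∈ Icc (0 : ℝ) (2 * π), lam = r + 2 * s * Real.cos θ} ∧
    (∀ lam : ℂ, Function.Injective ⇑(T - lam • 1)) ∧
    (∀ lam ∈ spectrum ℂ T, DenseRange ⇑(T - lam • 1)) := by
  have hs' : (s : ℂ) ≠ 0 := Complex.ofReal_ne_zero.2 hs
  have hconj := sub_smul_one_eq_conj_neumann hp' hs' hT
  have hcoe : ∀ lam : ℂ, ⇑(T - lam • 1) = (fun y => (s : ℂ) • (bvEquiv p).symm y) ∘
      ⇑(neumann (p := p) hp' - ((lam - r) / s) • 1) ∘ ⇑(bvEquiv p) := fun lam => by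
    rw [hconj]
    rfl
  have hmem : ∀ lam : ℂ, lam ∈ spectrum ℂ T ↔
      ∃ θ ∈ Icc (0 : ℝ) (2 * π), lam = r + 2 * s * Real.cos θ := by
    intro lam
    have hunit : lam ∈ spectrum ℂ T ↔
        ¬ IsUnit (neumann (p := p) hp' - ((lam - r) / s) • 1) := by
      rw [spectrum.mem_iff, Algebra.algebraMap_eq_smul_one, ← IsUnit.neg_iff, neg_sub, hconj,
        ← Units.smul_mk0 hs', isUnit_smul_iff, MulEquiv.isUnit_map]
    rw [hunit]
    constructor
    · intro h
      by_contra! hne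
      refine h (isUnit_neumann_sub hp' fun θ hθ heq => hne θ hθ ?_)
      field_simp at heq
      linear_combination heq
    · rintro ⟨θ, -, rfl⟩
      convert not_isUnit_neumann_sub_cos (p := p) hp' θ using 4
      field_simp
      ring
  refine ⟨?_, Set.ext hmem, fun lam => ?_, fun lam _ => ?_⟩
  · ext lam
    rw [hmem]
    constructor
    · rintro ⟨θ, -, rfl⟩
      refine ⟨2 * Real.cos θ, ⟨by linarith [Real.neg_one_le_cos θ], by
        linarith [Real.cos_le_one θ]⟩, ?_⟩
      push_cast
      ring
    · rintro ⟨t, ⟨ht₁, ht₂⟩, rfl⟩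
      refine ⟨Real.arccos (t / 2), ⟨Real.arccos_nonneg _,
        (Real.arccos_le_pi _).trans (by linarith [Real.pi_pos])⟩, ?_⟩
      rw [Real.cos_arccos (by linarith) (by linarith)]
      push_cast
      ring
  · rw [hcoe]
    exact ((smul_right_injective _ hs').comp (bvEquiv p).symm.injective).comp
      ((injective_neumann_sub hp' _).comp (bvEquiv p).injective)
  · rw [hcoe]
    have hsurj : Function.Surjective fun y : EllP p => (s : ℂ) • (bvEquiv p).symm y :=
      (MulAction.surjective₀ hs').comp (bvEquiv p).symm.surjective
    exact hsurj.denseRange.comp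
      ((denseRange_neumann_sub hp hp' _).comp (bvEquiv p).surjective.denseRange
        (ContinuousLinearMap.continuous _))
      ((bvEquiv p).symm.continuous.const_smul (s : ℂ))
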